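/- Uniqueness of the ground state of the octagon-square lattice on the plane: for all integers M, L ≥ 1, the hard-core fermion model on the planar octagon-square lattice O^plane_{M,L} (open boundary conditions in both directions) has a unique zero-energy ground state, i.e. dim ker H = 1. -/

import Mathlib

/-! ### The supersymmetric hard-core fermion model on a graph

For a finite simple graph `G` with totally ordered vertex set, the Hilbert space has an
orthonormal basis `{|I⟩ : I an independent set of G}`, the supercharge acts by
`Q|I⟩ = Σ_v ε(v,I) |I ∪ {v}⟩` (sum over `v ∉ I` with `I ∪ {v}` independent,
`ε(v,I) = (−1)^{#{w ∈ I : w < v}}`), and the Hamiltonian is `H = Q Q† + Q† Q`. -/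

open scoped BigOperators

/-- A finite set of vertices is independent if it contains no edge of `G`. -/
def Indep {V : Type*} (G : SimpleGraph V) (I : Finset V) : Prop :=
  ∀ ⦃a⦄, a ∈ I → ∀ ⦃b⦄, b ∈ I → ¬ G.Adj a b

lemma Indep.mono {V : Type*} {G : SimpleGraph V} {I J : Finset V}
    (hI : Indep G I) (hJI : J ⊆ I) : Indep G J :=
  fun _ ha _ hb => hI (hJI ha) (hJI hb)

/-- The independent sets of `G`, indexing the orthonormal basis of the Hilbert space. -/
def IndepSet {V : Type*} (G : SimpleGraph V) : Type _ := {I : Finset V // Indep G I}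

noncomputable instance {V : Type*} [Fintype V] [LinearOrder V] (G : SimpleGraph V) :
    Fintype (IndepSet G) := by
  classical exact Subtype.fintype _

instance {V : Type*} [LinearOrder V] (G : SimpleGraph V) : DecidableEq (IndepSet G) := by
  unfold IndepSet; infer_instance

/-- The Hilbert space `ℋ_G` of the hard-core fermion model: one orthonormal basis state
`|I⟩` for every independent set `I` of `G`. -/
noncomputable abbrev FockSpace {V : Type*} [Fintype V] [LinearOrder V] (G : SimpleGraph V) :=
  EuclideanSpace ℂ (IndepSet G)

/-- The fermionic sign `ε(v, I) = (−1)^{#{w ∈ I : w < v}}`. -/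
def fsign {V : Type*} [LinearOrder V] (I : Finset V) (v : V) : ℂ :=
  (-1) ^ (I.filter (· < v)).card

/-- The supercharge `Q`, with `Q|I⟩ = Σ_v ε(v,I) |I ∪ {v}⟩` over vertices `v ∉ I` such that
`I ∪ {v}` is independent; equivalently `(Qψ)(J) = Σ_{v ∈ J} ε(v, J∖{v}) ψ(J∖{v})`. -/
noncomputable def supercharge {V : Type*} [Fintype V] [LinearOrder V] (G : SimpleGraph V) :
    FockSpace G →ₗ[ℂ] FockSpace G where
  toFun ψ := WithLp.toLp 2 fun J => ∑ v ∈ J.1, fsign (J.1.erase v) v *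
      ψ ⟨J.1.erase v, J.2.mono (Finset.erase_subset v J.1)⟩
  map_add' ψ φ := by
    ext J
    exact (Finset.sum_congr rfl fun v _ => by exact mul_add _ _ _).trans Finset.sum_add_distrib
  map_smul' c ψ := by
    ext J
    exact (Finset.sum_congr rfl fun v _ => mul_left_comm _ c (ψ _)).trans
      (Finset.mul_sum _ _ _).symm

/-- The Hamiltonian `H = Q Q† + Q† Q` of the supersymmetric hard-core fermion model. -/
noncomputable def hamiltonian {V : Type*} [Fintype V] [LinearOrder V] (G : SimpleGraph V) :
    FockSpace G →ₗ[ℂ] FockSpace G :=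
  supercharge G ∘ₗ LinearMap.adjoint (supercharge G)
    + LinearMap.adjoint (supercharge G) ∘ₗ supercharge G

/-- The fermion-number operator `F`, with `F|I⟩ = |I| · |I⟩`. -/
noncomputable def numberOp {V : Type*} [Fintype V] [LinearOrder V] (G : SimpleGraph V) :
    FockSpace G →ₗ[ℂ] FockSpace G where
  toFun ψ := WithLp.toLp 2 fun I => (I.1.card : ℂ) * ψ I
  map_add' ψ φ := by ext I; simp [mul_add]
  map_smul' c ψ := by ext I; simp [mul_left_comm]

/-- The bosonic subspace: the span of the basis states `|I⟩` with `|I|` even. -/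
noncomputable def bosonic {V : Type*} [Fintype V] [LinearOrder V] (G : SimpleGraph V) :
    Submodule ℂ (FockSpace G) :=
  Submodule.span ℂ
    {e : FockSpace G | ∃ I : IndepSet G, Even I.1.card ∧ e = EuclideanSpace.single I 1}

/-- The fermionic subspace: the span of the basis states `|I⟩` with `|I|` odd. -/
noncomputable def fermionic {V : Type*} [Fintype V] [LinearOrder V] (G : SimpleGraph V) :
    Submodule ℂ (FockSpace G) :=
  Submodule.span ℂ
    {e : FockSpace G | ∃ I : IndepSet G, Odd I.1.card ∧ e = EuclideanSpace.single I 1}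

/-! ### The octagon-square (4-8) lattice in the plane -/

/-- Directed edge relation of the planar octagon-square lattice with `M × L` square
plaquettes: square-plaquette edges, horizontal linking edges `(i,j,1)-(i+1,j,3)` for
`0 ≤ i ≤ M−2`, and vertical linking edges `(i,j,2)-(i,j+1,0)` for `0 ≤ j ≤ L−2`, with no
wrap-around in either direction. -/
def octPlaneE (M L : ℕ) (a b : Fin M × Fin L × Fin 4) : Prop :=
  (a.1 = b.1 ∧ a.2.1 = b.2.1 ∧
    ((a.2.2 = 0 ∧ b.2.2 = 1) ∨ (a.2.2 = 1 ∧ b.2.2 = 2) ∨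
     (a.2.2 = 2 ∧ b.2.2 = 3) ∨ (a.2.2 = 3 ∧ b.2.2 = 0))) ∨
  ((b.1 : ℕ) = (a.1 : ℕ) + 1 ∧ a.2.1 = b.2.1 ∧ a.2.2 = 1 ∧ b.2.2 = 3) ∨
  (a.1 = b.1 ∧ (b.2.1 : ℕ) = (a.2.1 : ℕ) + 1 ∧ a.2.2 = 2 ∧ b.2.2 = 0)

/-- The planar octagon-square lattice `O^plane_{M,L}`, with open boundary conditions in
both directions. -/
def octPlane (M L : ℕ) : SimpleGraph (Fin M × Fin L × Fin 4) where
  Adj a b := a ≠ b ∧ (octPlaneE M L a b ∨ octPlaneE M L b a)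
  symm := by
    refine ⟨?_⟩
    rintro a b ⟨hne, h⟩
    exact ⟨hne.symm, by tauto⟩
  loopless := ⟨fun a h => h.1 rfl⟩

namespace OctSq

/-- An anticommuting, nowhere vanishing sign system. -/
structure Sgn {V : Type*} [LinearOrder V] (s : Finset V → V → ℂ) : Prop where
  ne : ∀ I w, s I w ≠ 0
  anti : ∀ I u w, u ≠ w → u ∉ I → w ∉ I →
    s I w * s (insert w I) u = -(s I u * s (insert u I) w)

/-- The coboundary operator on all functions of finite sets. -/
noncomputable def D {V : Type*} [LinearOrder V] (s : Finset V → V → ℂ)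
    (f : Finset V → ℂ) (J : Finset V) : ℂ :=
  ∑ w ∈ J, s (J.erase w) w * f (J.erase w)

lemma D_sub {V : Type*} [LinearOrder V] (s : Finset V → V → ℂ) (f g : Finset V → ℂ)
    (J : Finset V) : D s (fun I => f I - g I) J = D s f J - D s g J := by
  simp [D, mul_sub, Finset.sum_sub_distrib]

lemma D_add {V : Type*} [LinearOrder V] (s : Finset V → V → ℂ) (f g : Finset V → ℂ)
    (J : Finset V) : D s (fun I => f I + g I) J = D s f J + D s g J := by
  simp [D, mul_add, Finset.sum_add_distrib]

lemma D_smul {V : Type*} [LinearOrder V] (s : Finset V → V → ℂ) (a : ℂ) (f : Finset V → ℂ)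
    (J : Finset V) : D s (fun I => a * f I) J = a * D s f J := by
  simp [D, Finset.mul_sum, mul_left_comm]

lemma D_D {V : Type*} [LinearOrder V] {s : Finset V → V → ℂ} (hs : Sgn s)
    (f : Finset V → ℂ) (J : Finset V) : D s (D s f) J = 0 := by
  have h1 : D s (D s f) J = ∑ w ∈ J, ∑ u ∈ J, if u = w then 0 else
      s (J.erase w) w * (s ((J.erase w).erase u) u * f ((J.erase w).erase u)) := by
    unfold D
    refine Finset.sum_congr rfl fun w hw => ?_
    rw [Finset.mul_sum, ← Finset.add_sum_erase J _ hw]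
    simp only [if_true, zero_add]
    refine Finset.sum_congr rfl fun u hu => ?_
    rw [if_neg (Finset.ne_of_mem_erase hu)]
  have h2 : D s (D s f) J = - D s (D s f) J := by
    conv_lhs => rw [h1, Finset.sum_comm]
    rw [h1, ← Finset.sum_neg_distrib]
    refine Finset.sum_congr rfl fun w hw => ?_
    rw [← Finset.sum_neg_distrib]
    refine Finset.sum_congr rfl fun u hu => ?_
    by_cases h : u = w
    · simp [h]
    · rw [if_neg h, if_neg (Ne.symm h)]
      have := hs.anti ((J.erase w).erase u) u w h (by simp) (by simp)
      have e1 : insert u ((J.erase w).erase u) = J.erase w :=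
        Finset.insert_erase (Finset.mem_erase.2 ⟨h, hu⟩)
      have e2 : insert w ((J.erase w).erase u) = J.erase u := by
        rw [Finset.erase_right_comm]
        exact Finset.insert_erase (Finset.mem_erase.2 ⟨Ne.symm h, hw⟩)
      rw [e1, e2] at this
      rw [Finset.erase_right_comm (a := u) (b := w)]
      linear_combination f ((J.erase w).erase u) * this
  linear_combination h2 / 2

/-- All cocycles on `K` are coboundaries. -/
def Acyc {V : Type*} [LinearOrder V] (s : Finset V → V → ℂ) (K : Finset V → Prop) : Prop :=
  ∀ f : Finset V → ℂ, (∀ J, K J → D s f J = 0) → ∃ g, ∀ J, K J → D s g J = f J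

/-- Any two cocycles on `K` are linearly dependent modulo coboundaries. -/
def Amo {V : Type*} [LinearOrder V] (s : Finset V → V → ℂ) (K : Finset V → Prop) : Prop :=
  ∀ f₁ f₂ : Finset V → ℂ, (∀ J, K J → D s f₁ J = 0) → (∀ J, K J → D s f₂ J = 0) →
    ∃ a b : ℂ, (a ≠ 0 ∨ b ≠ 0) ∧ ∃ g, ∀ J, K J → D s g J = a * f₁ J + b * f₂ J

/-- Contraction with `v`. -/
noncomputable def contr {V : Type*} [LinearOrder V] (s : Finset V → V → ℂ) (v : V)
    (f : Finset V → ℂ) (I : Finset V) : ℂ :=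
  if v ∈ I then 0 else (s I v)⁻¹ * f (insert v I)

lemma D_contr {V : Type*} [LinearOrder V] {s : Finset V → V → ℂ} (hs : Sgn s) (v : V)
    (f : Finset V → ℂ) {J : Finset V} (hv : v ∉ J) :
    D s (contr s v f) J = f J - (s J v)⁻¹ * D s f (insert v J) := by
  have h3 : D s (contr s v f) J =
      -(s J v)⁻¹ * ∑ w ∈ J, s ((insert v J).erase w) w * f ((insert v J).erase w) := by
    unfold D contr
    rw [Finset.mul_sum]
    refine Finset.sum_congr rfl fun w hw => ?_
    have hwv : v ≠ w := fun h => hv (h ▸ hw)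
    rw [if_neg (by simp [hv]), Finset.erase_insert_of_ne hwv]
    have := hs.anti (J.erase w) v w hwv (by simp [hv]) (by simp)
    rw [Finset.insert_erase hw] at this
    have n1 := hs.ne J v
    have n2 := hs.ne (J.erase w) v
    field_simp
    linear_combination f (insert v (J.erase w)) * this
  rw [h3]
  conv_rhs => unfold D
  rw [Finset.sum_insert hv, Finset.erase_insert hv]
  have n1 := hs.ne J v
  field_simp
  ring

lemma acyc_cone {V : Type*} [LinearOrder V] {s : Finset V → V → ℂ} (hs : Sgn s)
    {K : Finset V → Prop} (v : V) (hK : ∀ I, K I → K (insert v I)) : Acyc s K := by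
  intro f hf
  refine ⟨contr s v f, fun J hJ => ?_⟩
  by_cases hv : v ∈ J
  · unfold D contr
    rw [Finset.sum_eq_single_of_mem v hv]
    · simp [Finset.insert_erase hv, hs.ne]
    · intro w _ hwv
      simp [hv, hwv.symm]
  · rw [D_contr hs v f hv, hf _ (hK J hJ)]
    simp

/-- Deletion of a vertex. -/
def del {V : Type*} (K : Finset V → Prop) (v : V) (I : Finset V) : Prop := K I ∧ v ∉ I

/-- Link of a vertex. -/
def link {V : Type*} [LinearOrder V] (K : Finset V → Prop) (v : V) (I : Finset V) : Prop :=
  K (insert v I) ∧ v ∉ I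

lemma core1 {V : Type*} [LinearOrder V] {s : Finset V → V → ℂ} (hs : Sgn s)
    {K : Finset V → Prop} (hK : ∀ I J, K I → J ⊆ I → K J) (v : V) (f g : Finset V → ℂ)
    (hf : ∀ J, K J → D s f J = 0) (hg : ∀ J, del K v J → D s g J = f J) :
    ∀ J, link K v J → D s (contr s v (fun I => f I - D s g I)) J = 0 := by
  rintro J ⟨hJ, hv⟩
  rw [D_contr hs v _ hv, D_sub, D_D hs, hf _ hJ,
    hg J ⟨hK _ _ hJ (Finset.subset_insert _ _), hv⟩]
  simp

lemma core2 {V : Type*} [LinearOrder V] {s : Finset V → V → ℂ} (hs : Sgn s)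
    {K : Finset V → Prop} (v : V) (f g e : Finset V → ℂ)
    (hg : ∀ J, del K v J → D s g J = f J)
    (he : ∀ J, link K v J → D s e J = contr s v (fun I => f I - D s g I) J) :
    ∃ g', ∀ J, K J → D s g' J = f J := by
  set t : Finset V → ℂ := fun I => if v ∈ I then s (I.erase v) v * e (I.erase v) else 0 with ht
  refine ⟨fun I => g I - t I, fun J hJ => ?_⟩
  rw [D_sub]
  by_cases hv : v ∈ J
  · have hv' : v ∉ J.erase v := by simp
    have h1 := he (J.erase v) ⟨by rwa [Finset.insert_erase hv], hv'⟩
    have h2 := D_contr hs v t hv'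
    have h3 : D s (contr s v t) (J.erase v) = D s e (J.erase v) := by
      unfold D
      refine Finset.sum_congr rfl fun w _ => ?_
      have : v ∉ (J.erase v).erase w := by simp
      simp only [contr, ht, if_neg this, Finset.mem_insert_self, if_true,
        Finset.erase_insert this]
      rw [inv_mul_cancel_left₀ (hs.ne _ _)]
    rw [h3, h1] at h2
    have h4 : t (J.erase v) = 0 := by simp [ht]
    rw [h4, contr, if_neg hv', Finset.insert_erase hv] at h2
    have n := hs.ne (J.erase v) v
    field_simp at h2
    linear_combination -h2
  · rw [hg J ⟨hJ, hv⟩]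
    have : D s t J = 0 := by
      unfold D
      refine Finset.sum_eq_zero fun w _ => ?_
      simp [ht, hv]
    rw [this, sub_zero]

lemma amo_of_link {V : Type*} [LinearOrder V] {s : Finset V → V → ℂ} (hs : Sgn s)
    {K : Finset V → Prop} (hK : ∀ I J, K I → J ⊆ I → K J) (v : V)
    (hl : Acyc s (link K v)) (hd : Amo s (del K v)) : Amo s K := by
  intro f₁ f₂ h₁ h₂
  obtain ⟨a, b, hab, g, hg⟩ := hd f₁ f₂ (fun J hJ => h₁ J hJ.1) (fun J hJ => h₂ J hJ.1)
  refine ⟨a, b, hab, ?_⟩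
  obtain ⟨e, he⟩ := hl _ (core1 hs hK v (fun I => a * f₁ I + b * f₂ I) g
    (fun J hJ => by rw [D_add, D_smul, D_smul, h₁ J hJ, h₂ J hJ]; simp) hg)
  exact core2 hs v _ g e hg he

lemma amo_of_del {V : Type*} [LinearOrder V] {s : Finset V → V → ℂ} (hs : Sgn s)
    {K : Finset V → Prop} (hK : ∀ I J, K I → J ⊆ I → K J) (v : V)
    (hd : Acyc s (del K v)) (hl : Amo s (link K v)) : Amo s K := by
  intro f₁ f₂ h₁ h₂
  obtain ⟨g₁, hg₁⟩ := hd f₁ (fun J hJ => h₁ J hJ.1)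
  obtain ⟨g₂, hg₂⟩ := hd f₂ (fun J hJ => h₂ J hJ.1)
  obtain ⟨a, b, hab, e, he⟩ := hl _ _ (core1 hs hK v f₁ g₁ h₁ hg₁) (core1 hs hK v f₂ g₂ h₂ hg₂)
  refine ⟨a, b, hab, core2 hs v _ (fun I => a * g₁ I + b * g₂ I) e ?_ ?_⟩
  · intro J hJ
    rw [D_add, D_smul, D_smul, hg₁ J hJ, hg₂ J hJ]
  · intro J hJ
    rw [he J hJ]
    simp only [contr, if_neg hJ.2, D_add, D_smul]
    ring

/-- Number of faces. -/
noncomputable def num {V : Type*} [Fintype V] (K : Finset V → Prop) : ℕ :=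
  Nat.card {I : Finset V // K I}

lemma num_del_link {V : Type*} [Fintype V] [LinearOrder V] (K : Finset V → Prop) (v : V) :
    num K = num (del K v) + num (link K v) := by
  classical
  unfold num
  rw [← Nat.card_sum]
  refine Nat.card_congr ?_
  refine (Equiv.sumCompl (fun I : {I : Finset V // K I} => v ∉ I.1)).symm.trans
    (Equiv.sumCongr ?_ ?_)
  · exact
    { toFun := fun I => ⟨I.1.1, I.1.2, I.2⟩
      invFun := fun I => ⟨⟨I.1, I.2.1⟩, I.2.2⟩
      left_inv := fun _ => rfl
      right_inv := fun _ => rfl }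
  · exact
    { toFun := fun I => ⟨I.1.1.erase v, by
        have h := not_not.1 I.2
        exact ⟨by rw [Finset.insert_erase h]; exact I.1.2, by simp⟩⟩
      invFun := fun I => ⟨⟨insert v I.1, I.2.1⟩, by simp⟩
      left_inv := fun I => Subtype.ext (Subtype.ext (Finset.insert_erase (not_not.1 I.2)))
      right_inv := fun I => Subtype.ext (Finset.erase_insert I.2.2) }

lemma num_cone {V : Type*} [Fintype V] [LinearOrder V] {K : Finset V → Prop}
    (hK : ∀ I J, K I → J ⊆ I → K J) (v : V) (hc : ∀ I, K I → K (insert v I)) :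
    Even (num K) := by
  have : link K v = del K v := by
    funext I
    exact propext ⟨fun h => ⟨hK _ _ h.1 (Finset.subset_insert _ _), h.2⟩,
      fun h => ⟨hc _ h.1, h.2⟩⟩
  rw [num_del_link K v, this]
  exact ⟨_, rfl⟩

/-- Independent subsets of `S`. -/
def ind {V : Type*} (G : SimpleGraph V) (S : Set V) (I : Finset V) : Prop :=
  ↑I ⊆ S ∧ Indep G I

lemma ind_mono {V : Type*} (G : SimpleGraph V) (S : Set V) (I J : Finset V)
    (h : ind G S I) (hJ : J ⊆ I) : ind G S J :=
  ⟨fun _ hx => h.1 (hJ hx), h.2.mono hJ⟩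

lemma del_ind {V : Type*} (G : SimpleGraph V) (S : Set V) (v : V) :
    del (ind G S) v = ind G (S \ {v}) := by
  funext I
  apply propext
  constructor
  · rintro ⟨⟨h1, h2⟩, h3⟩
    exact ⟨fun x hx => ⟨h1 hx, fun h => h3 (by rw [Set.mem_singleton_iff] at h; exact h ▸ hx)⟩, h2⟩
  · rintro ⟨h1, h2⟩
    exact ⟨⟨fun x hx => (h1 hx).1, h2⟩, fun h => (h1 h).2 rfl⟩

/-- Remove the closed neighbourhood. -/
def nb {V : Type*} (G : SimpleGraph V) (S : Set V) (v : V) : Set V :=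
  {x | x ∈ S ∧ x ≠ v ∧ ¬ G.Adj v x}

lemma link_ind {V : Type*} [LinearOrder V] (G : SimpleGraph V) (S : Set V) (v : V) (hv : v ∈ S) :
    link (ind G S) v = ind G (nb G S v) := by
  funext I
  apply propext
  constructor
  · rintro ⟨⟨h1, h2⟩, h3⟩
    refine ⟨fun x hx => ⟨h1 (by simp at hx; simp [hx]), fun h => h3 (h ▸ hx), ?_⟩,
      h2.mono (Finset.subset_insert _ _)⟩
    exact h2 (Finset.mem_insert_self _ _) (Finset.mem_insert_of_mem hx)
  · rintro ⟨h1, h2⟩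
    refine ⟨⟨?_, ?_⟩, fun h => (h1 h).2.1 rfl⟩
    · intro x hx
      rcases Finset.mem_insert.1 hx with rfl | hx
      · exact hv
      · exact (h1 hx).1
    · intro a ha b hb
      rcases Finset.mem_insert.1 ha with rfl | ha' <;> rcases Finset.mem_insert.1 hb with rfl | hb'
      · exact G.loopless.irrefl _
      · exact (h1 hb').2.2
      · exact fun h => (h1 ha').2.2 h.symm
      · have hfin := h2 ha' hb'
        exact hfin

/-- Acyclic with evenly many faces. -/
def Zero {V : Type*} [Fintype V] [LinearOrder V] (s : Finset V → V → ℂ) (G : SimpleGraph V)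
    (S : Set V) : Prop := Acyc s (ind G S) ∧ Even (num (ind G S))

/-- At most one class, with oddly many faces. -/
def One {V : Type*} [Fintype V] [LinearOrder V] (s : Finset V → V → ℂ) (G : SimpleGraph V)
    (S : Set V) : Prop := Amo s (ind G S) ∧ Odd (num (ind G S))

lemma zero_of_isolated {V : Type*} [Fintype V] [LinearOrder V] {s : Finset V → V → ℂ}
    (hs : Sgn s) (G : SimpleGraph V) (S : Set V) (v : V) (hv : v ∈ S)
    (h : ∀ w ∈ S, ¬ G.Adj v w) : Zero s G S := by
  have hc : ∀ I, ind G S I → ind G S (insert v I) := by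
    rintro I ⟨h1, h2⟩
    refine ⟨?_, ?_⟩
    · intro x hx
      rcases Finset.mem_insert.1 hx with rfl | hx
      · exact hv
      · exact h1 hx
    · intro a ha b hb
      rcases Finset.mem_insert.1 ha with rfl | ha' <;> rcases Finset.mem_insert.1 hb with rfl | hb'
      · exact G.loopless.irrefl _
      · exact h _ (h1 hb')
      · exact fun h' => h _ (h1 ha') h'.symm
      · have hfin := h2 ha' hb'
        exact hfin
  exact ⟨acyc_cone hs v hc, num_cone (ind_mono G S) v hc⟩

lemma one_of_link {V : Type*} [Fintype V] [LinearOrder V] {s : Finset V → V → ℂ}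
    (hs : Sgn s) (G : SimpleGraph V) (S : Set V) (v : V) (hv : v ∈ S)
    (hl : Zero s G (nb G S v)) (hd : One s G (S \ {v})) : One s G S := by
  unfold Zero at hl
  unfold One at hd
  rw [← link_ind G S v hv] at hl
  rw [← del_ind] at hd
  refine ⟨amo_of_link hs (ind_mono G S) v hl.1 hd.1, ?_⟩
  rw [num_del_link _ v]
  exact hd.2.add_even hl.2

lemma one_of_del {V : Type*} [Fintype V] [LinearOrder V] {s : Finset V → V → ℂ}
    (hs : Sgn s) (G : SimpleGraph V) (S : Set V) (v : V) (hv : v ∈ S)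
    (hd : Zero s G (S \ {v})) (hl : One s G (nb G S v)) : One s G S := by
  unfold One at hl
  unfold Zero at hd
  rw [← link_ind G S v hv] at hl
  rw [← del_ind] at hd
  refine ⟨amo_of_del hs (ind_mono G S) v hd.1 hl.1, ?_⟩
  rw [num_del_link _ v]
  exact hd.2.add_odd hl.2

lemma one_empty {V : Type*} [Fintype V] [LinearOrder V] (s : Finset V → V → ℂ)
    (G : SimpleGraph V) : One s G ∅ := by
  have h : ∀ I, ind G ∅ I ↔ I = ∅ := by
    intro I
    constructor
    · rintro ⟨h, -⟩
      simpa using h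
    · rintro rfl
      exact ⟨by simp, by intro a ha; simp at ha⟩
  constructor
  · intro f₁ f₂ _ _
    by_cases h0 : f₁ ∅ = 0
    · refine ⟨1, 0, by simp, fun _ => 0, fun J hJ => ?_⟩
      rw [h] at hJ
      subst hJ
      simp [D, h0]
    · refine ⟨f₂ ∅, -f₁ ∅, by simp [h0], fun _ => 0, fun J hJ => ?_⟩
      rw [h] at hJ
      subst hJ
      simp [D, mul_comm]
  · have : ind G ∅ = fun I => I = ∅ := funext fun I => propext (h I)
    rw [num, this]
    simp

/-- Vertices lying in the plaquettes of `T`. -/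
def cells {M L : ℕ} (T : Finset (Fin M × Fin L)) : Set (Fin M × Fin L × Fin 4) :=
  {x | (x.1, x.2.1) ∈ T}

lemma one_cells {M L : ℕ} [LinearOrder (Fin M × Fin L × Fin 4)]
    {s : Finset (Fin M × Fin L × Fin 4) → (Fin M × Fin L × Fin 4) → ℂ} (hs : Sgn s)
    (T : Finset (Fin M × Fin L)) : One s (octPlane M L) (cells T) := by
  induction T using Finset.strongInduction with
  | H T ih =>
    rcases T.eq_empty_or_nonempty with rfl | hT
    · have : cells (∅ : Finset (Fin M × Fin L)) = ∅ := by ext; simp [cells]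
      rw [this]
      exact one_empty _ _
    · obtain ⟨⟨i, j⟩, hp, hmin⟩ := T.exists_min_image (fun p => (p.1 : ℕ) + (p.2 : ℕ)) hT
      have key := ih (T.erase (i, j)) (Finset.erase_ssubset hp)
      have h0 : ∀ x ∈ cells T, (octPlane M L).Adj (i, j, 0) x → x = (i, j, 1) ∨ x = (i, j, 3) := by
        rintro ⟨i', j', k⟩ hx ⟨-, h⟩
        have hm := hmin (i', j') hx
        simp only [octPlaneE, Prod.mk.injEq, Fin.ext_iff] at h hm ⊢
        simp only [Fin.val_zero, Fin.val_one, Fin.val_two, Fin.isValue, show ((3 : Fin 4) : ℕ) = 3 from rfl] at h ⊢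
        omega
      have h3 : ∀ x ∈ cells T, (octPlane M L).Adj (i, j, 3) x → x = (i, j, 0) ∨ x = (i, j, 2) := by
        rintro ⟨i', j', k⟩ hx ⟨-, h⟩
        have hm := hmin (i', j') hx
        simp only [octPlaneE, Prod.mk.injEq, Fin.ext_iff] at h hm ⊢
        simp only [Fin.val_zero, Fin.val_one, Fin.val_two, Fin.isValue, show ((3 : Fin 4) : ℕ) = 3 from rfl] at h ⊢
        omega
      have a21 : (octPlane M L).Adj (i, j, 2) (i, j, 1) := by simp [octPlane, octPlaneE]
      have a23 : (octPlane M L).Adj (i, j, 2) (i, j, 3) := by simp [octPlane, octPlaneE]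
      have a10 : (octPlane M L).Adj (i, j, 1) (i, j, 0) := by simp [octPlane, octPlaneE]
      have a03 : (octPlane M L).Adj (i, j, 0) (i, j, 3) := by simp [octPlane, octPlaneE]
      have n20 : ¬ (octPlane M L).Adj (i, j, 2) (i, j, 0) := by simp [octPlane, octPlaneE]
      have n13 : ¬ (octPlane M L).Adj (i, j, 1) (i, j, 3) := by simp [octPlane, octPlaneE]
      have mem : ∀ k, (i, j, k) ∈ cells T := fun k => hp
      refine one_of_link hs _ _ (i, j, 2) hp ?_ ?_
      · refine zero_of_isolated hs _ _ (i, j, 0) ⟨hp, by simp, n20⟩ ?_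
        rintro w ⟨hw, -, hn⟩ ha
        rcases h0 w hw ha with rfl | rfl
        · exact hn a21
        · exact hn a23
      refine one_of_link hs _ _ (i, j, 1) ⟨hp, by simp⟩ ?_ ?_
      · refine zero_of_isolated hs _ _ (i, j, 3) ⟨⟨hp, by simp⟩, by simp, n13⟩ ?_
        rintro w ⟨⟨hw, hn2⟩, -, hn⟩ ha
        rcases h3 w hw ha with rfl | rfl
        · exact hn a10
        · exact hn2 rfl
      refine one_of_del hs _ _ (i, j, 0) ⟨⟨hp, by simp⟩, by simp⟩ ?_ ?_
      · refine zero_of_isolated hs _ _ (i, j, 3) ⟨⟨⟨hp, by simp⟩, by simp⟩, by simp⟩ ?_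
        rintro w ⟨⟨⟨hw, hn2⟩, hn1⟩, hn⟩ ha
        rcases h3 w hw ha with rfl | rfl
        · exact hn rfl
        · exact hn2 rfl
      · convert key using 1
        ext ⟨i', j', k⟩
        constructor
        · rintro ⟨⟨⟨hw, hn2⟩, hn1⟩, hn0, hn⟩
          refine Finset.mem_erase.2 ⟨?_, hw⟩
          intro h
          obtain ⟨rfl, rfl⟩ := Prod.mk.inj h
          fin_cases k
          · exact hn0 rfl
          · exact hn1 rfl
          · exact hn2 rfl
          · exact hn a03
        · intro h
          obtain ⟨h1, h2⟩ := Finset.mem_erase.1 h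
          have h1' : ∀ k', (i', j', k) ≠ (i, j, k') := by
            intro k' h
            simp only [Prod.mk.injEq] at h
            exact h1 (by simp [h])
          refine ⟨⟨⟨h2, h1' _⟩, h1' _⟩, h1' _, fun ha => ?_⟩
          rcases h0 _ h2 ha with h | h <;> exact h1' _ h

lemma sgn_fsign {V : Type*} [LinearOrder V] : Sgn (fun (I : Finset V) v => fsign I v) := by
  constructor
  · intro I w
    simp [fsign]
  · intro I u w huw hu hw
    simp only [fsign, Finset.filter_insert]
    rcases lt_or_gt_of_ne huw with h | h
    · rw [if_neg (not_lt.2 h.le), if_pos h, Finset.card_insert_of_notMem (by simp [hu])]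
      ring
    · rw [if_pos h, if_neg (not_lt.2 h.le), Finset.card_insert_of_notMem (by simp [hw])]
      ring

lemma ker_ham {V : Type*} [Fintype V] [LinearOrder V] (G : SimpleGraph V) (x : FockSpace G) :
    hamiltonian G x = 0 ↔ supercharge G x = 0 ∧ LinearMap.adjoint (supercharge G) x = 0 := by
  constructor
  · intro h
    have h1 : inner ℂ (hamiltonian G x) x = (0 : ℂ) := by rw [h, inner_zero_left]
    simp only [hamiltonian, LinearMap.add_apply, LinearMap.comp_apply, inner_add_left] at h1
    rw [LinearMap.adjoint_inner_left, ← LinearMap.adjoint_inner_right,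
      inner_self_eq_norm_sq_to_K, inner_self_eq_norm_sq_to_K] at h1
    have h2 : ‖LinearMap.adjoint (supercharge G) x‖ ^ 2 + ‖supercharge G x‖ ^ 2 = 0 := by
      apply Complex.ofReal_injective
      push_cast
      exact h1
    constructor
    · rw [← norm_eq_zero]
      nlinarith [sq_nonneg ‖LinearMap.adjoint (supercharge G) x‖, sq_nonneg ‖supercharge G x‖]
    · rw [← norm_eq_zero]
      nlinarith [sq_nonneg ‖LinearMap.adjoint (supercharge G) x‖, sq_nonneg ‖supercharge G x‖]
  · rintro ⟨h1, h2⟩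
    simp [hamiltonian, h1, h2]

open Classical in
/-- Extension by zero. -/
noncomputable def ext0 {V : Type*} [Fintype V] [LinearOrder V] (G : SimpleGraph V)
    (x : FockSpace G) (I : Finset V) : ℂ := if h : Indep G I then x ⟨I, h⟩ else 0

/-- Restriction to independent sets. -/
noncomputable def res {V : Type*} [Fintype V] [LinearOrder V] (G : SimpleGraph V)
    (f : Finset V → ℂ) : FockSpace G := WithLp.toLp 2 fun J => f J.1

lemma supercharge_apply' {V : Type*} [Fintype V] [LinearOrder V] (G : SimpleGraph V)
    (x : FockSpace G) (J : IndepSet G) :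
    supercharge G x J = ∑ v ∈ J.1, fsign (J.1.erase v) v *
      x ⟨J.1.erase v, J.2.mono (Finset.erase_subset v J.1)⟩ := rfl

lemma supercharge_ext0 {V : Type*} [Fintype V] [LinearOrder V] (G : SimpleGraph V)
    (x : FockSpace G) (J : IndepSet G) :
    supercharge G x J = D (fun I v => fsign I v) (ext0 G x) J.1 := by
  rw [supercharge_apply', D]
  refine Finset.sum_congr rfl fun v _ => ?_
  rw [ext0, dif_pos (J.2.mono (Finset.erase_subset v J.1))]

lemma supercharge_res {V : Type*} [Fintype V] [LinearOrder V] (G : SimpleGraph V)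
    (f : Finset V → ℂ) (J : IndepSet G) :
    supercharge G (res G f) J = D (fun I v => fsign I v) f J.1 := rfl

lemma supercharge_sq {V : Type*} [Fintype V] [LinearOrder V] (G : SimpleGraph V)
    (x : FockSpace G) : supercharge G (supercharge G x) = 0 := by
  have h : supercharge G x = res G (D (fun I v => fsign I v) (ext0 G x)) := by
    ext J
    exact supercharge_ext0 G x J
  ext J
  rw [h, supercharge_res, D_D sgn_fsign]
  rfl

lemma range_inf_ker {V : Type*} [Fintype V] [LinearOrder V] (G : SimpleGraph V)
    (x y : FockSpace G) (hx : x = supercharge G y)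
    (h : LinearMap.adjoint (supercharge G) x = 0) : x = 0 := by
  rw [← inner_self_eq_zero (𝕜 := ℂ)]
  conv_lhs => rw [hx]
  rw [← LinearMap.adjoint_inner_right, ← hx, h, inner_zero_right]

lemma finrank_ker_of_one {V : Type*} [Fintype V] [LinearOrder V] (G : SimpleGraph V)
    (h : One (fun (I : Finset V) v => fsign I v) G Set.univ) :
    Module.finrank ℂ ↥(LinearMap.ker (hamiltonian G)) = 1 := by
  obtain ⟨h1, h2⟩ := h
  have hne : LinearMap.ker (hamiltonian G) ≠ ⊥ := by
    intro hb
    have hk : LinearMap.ker (supercharge G) = LinearMap.range (supercharge G) := by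
      apply le_antisymm
      · intro x hx
        obtain ⟨y, hy, z, hz, rfl⟩ := (LinearMap.range (supercharge G)).exists_add_mem_mem_orthogonal x
        obtain ⟨y', rfl⟩ := hy
        have hz0 : z = 0 := by
          rw [← Submodule.mem_bot ℂ, ← hb, LinearMap.mem_ker, ker_ham]
          constructor
          · rw [LinearMap.mem_ker, map_add, supercharge_sq, zero_add] at hx
            exact hx
          · rw [← inner_self_eq_zero (𝕜 := ℂ), LinearMap.adjoint_inner_right]
            exact (Submodule.mem_orthogonal _ _).1 hz _ ⟨_, rfl⟩ |> fun h => by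
              rw [← inner_conj_symm] at h ⊢; simpa using h
        rw [hz0, add_zero]
        exact ⟨_, rfl⟩
      · rintro _ ⟨y, rfl⟩
        exact supercharge_sq G y
    have hr := LinearMap.finrank_range_add_finrank_ker (supercharge G)
    rw [hk, finrank_euclideanSpace] at hr
    have hn : num (ind G Set.univ) = Fintype.card (IndepSet G) := by
      rw [← Nat.card_eq_fintype_card]
      have : ind G Set.univ = Indep G := by
        funext I
        simp [ind]
      rw [this]
      rfl
    rw [hn, ← hr] at h2
    exact (Nat.not_even_iff_odd.2 h2) ⟨_, rfl⟩
  obtain ⟨x, hx, hx0⟩ := Submodule.exists_mem_ne_zero_of_ne_bot hne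
  refine (finrank_eq_one_iff_of_nonzero' (⟨x, hx⟩ : LinearMap.ker (hamiltonian G))
    (fun h => hx0 (congrArg Subtype.val h))).2 ?_
  rintro ⟨y, hy⟩
  have hx' := (ker_ham G x).1 hx
  have hy' := (ker_ham G y).1 hy
  obtain ⟨a, b, hab, g, hg⟩ := h1 (ext0 G x) (ext0 G y)
    (fun J hJ => by rw [← supercharge_ext0 G x ⟨J, hJ.2⟩, hx'.1]; rfl)
    (fun J hJ => by rw [← supercharge_ext0 G y ⟨J, hJ.2⟩, hy'.1]; rfl)
  have hz : a • x + b • y = 0 := by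
    refine range_inf_ker G _ (res G g) ?_ (by simp [hx'.2, hy'.2])
    ext J
    rw [supercharge_res, hg J.1 ⟨Set.subset_univ _, J.2⟩, ext0, ext0, dif_pos J.2, dif_pos J.2]
    rfl
  have hb : b ≠ 0 := by
    rintro rfl
    rcases hab with ha | hb
    · rw [zero_smul, add_zero, smul_eq_zero] at hz
      exact hz.elim ha hx0
    · exact hb rfl
  refine ⟨-(b⁻¹ * a), Subtype.ext ?_⟩
  change -(b⁻¹ * a) • x = y
  have h5 : b⁻¹ • (a • x + b • y) = 0 := by rw [hz, smul_zero]
  rw [smul_add, smul_smul, smul_smul, inv_mul_cancel₀ hb, one_smul] at h5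
  rw [neg_smul]
  exact neg_eq_of_add_eq_zero_right h5

end OctSq

/-- For `M, L ≥ 1`, the hard-core fermion model on the planar
octagon-square lattice `O^plane_{M,L}` has a unique zero-energy ground state. -/
theorem octagon_square_plane_ground_state_unique (M L : ℕ) (hM : 1 ≤ M) (hL : 1 ≤ L)
    [LinearOrder (Fin M × Fin L × Fin 4)] :
    Module.finrank ℂ ↥(LinearMap.ker (hamiltonian (octPlane M L))) = 1 := by
  refine OctSq.finrank_ker_of_one _ ?_
  have h := OctSq.one_cells (M := M) (L := L) (OctSq.sgn_fsign) Finset.univ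
  have e : OctSq.cells (Finset.univ : Finset (Fin M × Fin L)) = Set.univ := by
    ext x
    simp [OctSq.cells]
  rwa [e] at h
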